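/- Suppose γ ≥ h. Then lim_{α↓0} α^h·E(α) = ψ, where ψ = [∫_0^∞ x·exp{c·μ·x·𝟙{γ = h} − μ·F^{(k)}(0)·x^{k+1}/(k+1)!} dx] / [∫_0^∞ exp{c·μ·x·𝟙{γ = h} − μ·F^{(k)}(0)·x^{k+1}/(k+1)!} dx]. In particular ψ depends on F only through the first nonzero derivative F^{(k)}(0). -/

import Mathlib

open Filter Set Topology MeasureTheory

open scoped Classical

/-- `J(α) = ∫_0^∞ exp{λ(α) ∫_0^x F̄(α u) du - μ x} dx` for the `M/M/1+GI` queue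
with `ρ(α) = 1 + c α^γ`, `λ(α) = ρ(α) μ`, patience CDF `x ↦ F(α x)`. -/
noncomputable def Jq (F : ℝ → ℝ) (μ c γ α : ℝ) : ℝ :=
  ∫ x in Set.Ioi (0 : ℝ),
    Real.exp ((1 + c * α ^ γ) * μ * (∫ u in (0 : ℝ)..x, (1 - F (α * u))) - μ * x)

/-- `J₁(α) = ∫_0^∞ x exp{λ(α) ∫_0^x F̄(α u) du - μ x} dx`. -/
noncomputable def J1q (F : ℝ → ℝ) (μ c γ α : ℝ) : ℝ :=
  ∫ x in Set.Ioi (0 : ℝ),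
    x * Real.exp ((1 + c * α ^ γ) * μ * (∫ u in (0 : ℝ)..x, (1 - F (α * u))) - μ * x)

/-- Exact mean steady-state virtual waiting time `E(α) = λ(α) J₁(α) / (1 + λ(α) J(α))`
in the `M/M/1+GI` model. -/
noncomputable def Emean (F : ℝ → ℝ) (μ c γ α : ℝ) : ℝ :=
  (1 + c * α ^ γ) * μ * J1q F μ c γ α / (1 + (1 + c * α ^ γ) * μ * Jq F μ c γ α)

/-- A function whose derivatives of order `< k` at the left endpoint `0` vanish is asymptotic to
`F^{(k)}(0) x^k / k!` there. -/
lemma tendsto_div_pow_of_iteratedDerivWithin_eq_zero {k : ℕ} {F : ℝ → ℝ}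
    (hF_smooth : ContDiffOn ℝ k F (Set.Ici 0))
    (hF_derivs : ∀ j < k, iteratedDerivWithin j F (Set.Ici 0) 0 = 0) :
    Tendsto (fun z => F z / z ^ k) (𝓝[>] 0)
      (𝓝 (iteratedDerivWithin k F (Set.Ici 0) 0 / Nat.factorial k)) := by
  have h := (taylor_tendsto (convex_Ici (0 : ℝ)) self_mem_Ici hF_smooth).mono_left
    (nhdsWithin_mono 0 Ioi_subset_Ici_self)
  have hT : ∀ x, taylorWithinEval F k (Set.Ici 0) 0 x
      = iteratedDerivWithin k F (Set.Ici 0) 0 / Nat.factorial k * x ^ k := by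
    intro x
    rw [taylor_within_apply, Finset.sum_range_succ, Finset.sum_eq_zero]
    · simp only [sub_zero, zero_add, smul_eq_mul]
      ring
    · intro j hj
      rw [hF_derivs j (Finset.mem_range.mp hj), smul_zero]
  have h' := h.add_const (iteratedDerivWithin k F (Set.Ici 0) 0 / Nat.factorial k)
  rw [zero_add] at h'
  refine h'.congr' ?_
  filter_upwards [self_mem_nhdsWithin] with z hz
  have hz' : z ^ k ≠ 0 := pow_ne_zero _ (ne_of_gt hz)
  rw [hT]
  simp only [sub_zero, smul_eq_mul]
  field_simp
  ring

/-- Integrated version of an equivalent at `0⁺`. -/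
lemma tendsto_integral_div_pow_succ {k : ℕ} {F : ℝ → ℝ} {b : ℝ} (hF : Continuous F)
    (h : Tendsto (fun z => F z / z ^ k) (𝓝[>] 0) (𝓝 b)) :
    Tendsto (fun z => (∫ u in (0 : ℝ)..z, F u) / z ^ (k + 1)) (𝓝[>] 0) (𝓝 (b / (k + 1))) := by
  have hderiv : ∀ z, HasDerivAt (fun z => ∫ u in (0 : ℝ)..z, F u) (F z) z := fun z =>
    (hF.integral_hasStrictDerivAt 0 z).hasDerivAt
  refine HasDerivAt.lhopital_zero_nhdsGT (f' := F) (g' := fun z => ((k + 1 : ℕ) : ℝ) * z ^ k)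
    (Eventually.of_forall hderiv) (Eventually.of_forall fun z => ?_) ?_ ?_ ?_ ?_
  · simpa using hasDerivAt_pow (k + 1) z
  · filter_upwards [self_mem_nhdsWithin] with z hz
    exact mul_ne_zero (by positivity) (pow_ne_zero _ (ne_of_gt hz))
  · have := (hderiv 0).continuousAt.tendsto
    simp only [intervalIntegral.integral_same] at this
    exact this.mono_left nhdsWithin_le_nhds
  · have : Tendsto (fun z : ℝ => z ^ (k + 1)) (𝓝 0) (𝓝 (0 ^ (k + 1))) :=
      (continuous_pow (k + 1)).tendsto 0
    rw [zero_pow (Nat.succ_ne_zero k)] at this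
    exact this.mono_left nhdsWithin_le_nhds
  · refine (h.div_const ((k : ℝ) + 1)).congr fun z => ?_
    rw [div_div, mul_comm]
    push_cast
    rfl

/-- The running average of a monotone function is monotone. -/
lemma Monotone.mul_integral_le_mul_integral {f : ℝ → ℝ} (hf : Monotone f) {a b : ℝ}
    (ha : 0 ≤ a) (hab : a ≤ b) :
    b * ∫ u in (0 : ℝ)..a, f u ≤ a * ∫ u in (0 : ℝ)..b, f u := by
  have hi : ∀ s t : ℝ, IntervalIntegrable f volume s t := fun s t => hf.intervalIntegrable
  rw [← intervalIntegral.integral_add_adjacent_intervals (hi 0 a) (hi a b)]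
  have h1 : ∫ u in (0 : ℝ)..a, f u ≤ a * f a := by
    have := intervalIntegral.integral_mono_on ha (hi 0 a)
      (_root_.intervalIntegrable_const (c := f a)) (fun u hu => hf hu.2)
    simpa using this
  have h2 : (b - a) * f a ≤ ∫ u in a..b, f u := by
    have := intervalIntegral.integral_mono_on hab
      (_root_.intervalIntegrable_const (c := f a)) (hi a b) (fun u hu => hf hu.1)
    simpa using this
  nlinarith [mul_le_mul_of_nonneg_left h1 (sub_nonneg.mpr hab), mul_le_mul_of_nonneg_left h2 ha]

/-- A nonnegative function with nondecreasing average slope, large enough at `Y`, forces linear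
decay. -/
lemma linear_sub_le_of_average_mono {p q M Y : ℝ} {H : ℝ → ℝ} (hY : 0 < Y) (hM : 0 ≤ M)
    (hp : p ≤ M) (hq : 0 ≤ q) (hH0 : ∀ y, 0 ≤ y → 0 ≤ H y)
    (hH : ∀ y, Y ≤ y → y * H Y ≤ Y * H y) (hHY : (M + 1) * Y ≤ q * H Y) {y : ℝ} (hy : 0 ≤ y) :
    p * y - q * H y ≤ (M + 1) * Y - y := by
  have hpy : p * y ≤ M * y := mul_le_mul_of_nonneg_right hp hy
  rcases le_total y Y with h | h
  · nlinarith [mul_nonneg hq (hH0 y hy), mul_le_mul_of_nonneg_left h hM]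
  · have h1 : y * ((M + 1) * Y) ≤ Y * (q * H y) :=
      (mul_le_mul_of_nonneg_left hHY hy).trans (by nlinarith [mul_le_mul_of_nonneg_left (hH y h) hq])
    have h2 : (M + 1) * y ≤ q * H y := by
      refine le_of_mul_le_mul_left ?_ hY
      linarith
    nlinarith [mul_nonneg hM hY.le]

lemma integrableOn_pow_mul_exp_sub (j : ℕ) (C : ℝ) :
    IntegrableOn (fun y : ℝ => y ^ j * Real.exp (C - y)) (Ioi 0) := by
  have h := (Real.GammaIntegral_convergent (s := (j : ℝ) + 1) (by positivity)).const_mul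
    (Real.exp C)
  refine h.congr (Eventually.of_forall fun y => ?_)
  beta_reduce
  rw [add_sub_cancel_right, Real.rpow_natCast, sub_eq_add_neg, Real.exp_add]
  ring

/-- Laplace-type limit: exponents `p y - q H(y)` with convergent coefficients and `H` converging to
`A y^{k+1}` with nondecreasing average slope. -/
lemma tendsto_integral_pow_mul_exp {ι : Type*} {l : Filter ι} [l.IsCountablyGenerated] [l.NeBot]
    {k : ℕ} (hk : 1 ≤ k) {p q : ι → ℝ} {H : ι → ℝ → ℝ} {p₀ q₀ A : ℝ}
    (hq₀ : 0 < q₀) (hA : 0 < A) (hp : Tendsto p l (𝓝 p₀)) (hq : Tendsto q l (𝓝 q₀))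
    (hH : ∀ y, 0 < y → Tendsto (fun i => H i y) l (𝓝 (A * y ^ (k + 1))))
    (hHc : ∀ᶠ i in l, Continuous (H i)) (hH0 : ∀ᶠ i in l, ∀ y, 0 ≤ y → 0 ≤ H i y)
    (hHs : ∀ᶠ i in l, ∀ a b, 0 ≤ a → a ≤ b → b * H i a ≤ a * H i b) (j : ℕ) :
    IntegrableOn (fun y : ℝ => y ^ j * Real.exp (p₀ * y - q₀ * (A * y ^ (k + 1)))) (Ioi 0) ∧
    Tendsto (fun i => ∫ y in Ioi (0 : ℝ), y ^ j * Real.exp (p i * y - q i * H i y)) l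
      (𝓝 (∫ y in Ioi (0 : ℝ), y ^ j * Real.exp (p₀ * y - q₀ * (A * y ^ (k + 1))))) := by
  set M : ℝ := |p₀| + 1 with hM
  have hM0 : 0 ≤ M := by positivity
  obtain ⟨Y, hY, hYlim⟩ : ∃ Y : ℝ, 0 < Y ∧ (M + 1) * Y < q₀ * (A * Y ^ (k + 1)) := by
    refine ⟨1 + (M + 1) / (q₀ * A), by positivity, ?_⟩
    set Y : ℝ := 1 + (M + 1) / (q₀ * A) with hYdef
    have hY1 : 1 ≤ Y := by
      have : 0 ≤ (M + 1) / (q₀ * A) := by positivity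
      linarith
    have h1 : M + 1 < q₀ * A * Y := by
      rw [hYdef, mul_add, mul_div_cancel₀ _ (by positivity)]
      nlinarith [mul_pos hq₀ hA]
    have h2 : Y ≤ Y ^ k := le_self_pow₀ hY1 (by lia)
    have h3 : M + 1 < q₀ * A * Y ^ k :=
      h1.trans_le (mul_le_mul_of_nonneg_left h2 (by positivity))
    calc (M + 1) * Y < q₀ * A * Y ^ k * Y := mul_lt_mul_of_pos_right h3 (by linarith)
      _ = q₀ * (A * Y ^ (k + 1)) := by ring
  have hbound : ∀ᶠ i in l, ∀ y, 0 < y →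
      y ^ j * Real.exp (p i * y - q i * H i y) ≤ y ^ j * Real.exp ((M + 1) * Y - y) := by
    have hpM : ∀ᶠ i in l, p i < M :=
      hp.eventually_lt_const ((le_abs_self p₀).trans_lt (lt_add_one _))
    filter_upwards [hpM, hq.eventually_const_lt hq₀, hH0, hHs,
      (hq.mul (hH Y hY)).eventually_const_lt hYlim] with i h1 h2 h3 h4 h5 y hy
    have := linear_sub_le_of_average_mono hY hM0 h1.le h2.le h3 (fun y hy => h4 Y y hY.le hy)
      h5.le hy.le
    gcongr
  have hlim : ∀ y, 0 < y → Tendsto (fun i => y ^ j * Real.exp (p i * y - q i * H i y)) l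
      (𝓝 (y ^ j * Real.exp (p₀ * y - q₀ * (A * y ^ (k + 1))))) := fun y hy =>
    ((Real.continuous_exp.tendsto _).comp
      ((hp.mul_const y).sub (hq.mul (hH y hy)))).const_mul _
  have hint := integrableOn_pow_mul_exp_sub j ((M + 1) * Y)
  refine ⟨hint.mono' (Continuous.aestronglyMeasurable (by fun_prop)) ?_,
    tendsto_integral_filter_of_dominated_convergence _ ?_ ?_ hint ?_⟩
  · filter_upwards [ae_restrict_mem measurableSet_Ioi] with y (hy : 0 < y)
    rw [Real.norm_of_nonneg (by positivity)]
    exact le_of_tendsto (hlim y hy) (hbound.mono fun i h => h y hy)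
  · filter_upwards [hHc] with i hi
    exact Continuous.aestronglyMeasurable (by fun_prop)
  · filter_upwards [hbound] with i hi
    filter_upwards [ae_restrict_mem measurableSet_Ioi] with y (hy : 0 < y)
    rw [Real.norm_of_nonneg (by positivity)]
    exact hi y hy
  · filter_upwards [ae_restrict_mem measurableSet_Ioi] with y hy
    exact hlim y hy

/-- Under the scaling `x = α^{-k/(k+1)} y`, the integrated patience CDF converges to a monomial. -/
lemma tendsto_integral_rescaled {k : ℕ} {F : ℝ → ℝ} {A y : ℝ} (hy : 0 < y)
    (h : Tendsto (fun z => (∫ u in (0 : ℝ)..z, F u) / z ^ (k + 1)) (𝓝[>] 0) (𝓝 A)) :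
    Tendsto (fun α : ℝ => ∫ u in (0 : ℝ)..(α ^ ((k : ℝ) / (k + 1)))⁻¹ * y, F (α * u)) (𝓝[>] 0)
      (𝓝 (A * y ^ (k + 1))) := by
  have hk1 : (0 : ℝ) < k + 1 := by positivity
  have hz : Tendsto (fun α : ℝ => α ^ (1 / ((k : ℝ) + 1)) * y) (𝓝[>] 0) (𝓝[>] 0) := by
    refine tendsto_nhdsWithin_iff.mpr ⟨?_, ?_⟩
    · have : Tendsto (fun α : ℝ => α ^ (1 / ((k : ℝ) + 1)) * y) (𝓝 0)
          (𝓝 ((0 : ℝ) ^ (1 / ((k : ℝ) + 1)) * y)) :=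
        ((Real.continuousAt_rpow_const 0 _ (Or.inr (by positivity))).tendsto).mul_const y
      rw [Real.zero_rpow (by positivity), zero_mul] at this
      exact this.mono_left nhdsWithin_le_nhds
    · filter_upwards [self_mem_nhdsWithin] with α (hα : 0 < α)
      exact mul_pos (Real.rpow_pos_of_pos hα _) hy
  refine ((h.comp hz).mul_const (y ^ (k + 1))).congr' ?_
  filter_upwards [self_mem_nhdsWithin] with α (hα : 0 < α)
  have hpow : (α ^ (1 / ((k : ℝ) + 1)) * y) ^ (k + 1) = α * y ^ (k + 1) := by
    rw [mul_pow, ← Real.rpow_mul_natCast hα.le]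
    push_cast
    rw [one_div_mul_cancel hk1.ne', Real.rpow_one]
  have harg : α * ((α ^ ((k : ℝ) / (k + 1)))⁻¹ * y) = α ^ (1 / ((k : ℝ) + 1)) * y := by
    rw [← mul_assoc, ← div_eq_mul_inv]
    nth_rewrite 1 [← Real.rpow_one α]
    rw [← Real.rpow_sub hα]
    congr 2
    field_simp
    ring
  rw [intervalIntegral.integral_comp_mul_left (fun u => F u) hα.ne', mul_zero, harg]
  simp only [Function.comp_apply, hpow, smul_eq_mul]
  field_simp

/-- critically loaded heavy-traffic limit for the exact `M/M/1+GI` mean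
virtual waiting time: if `γ ≥ h = k/(k+1)` then `α^h E(α) → ψ`, where
`ψ = ∫_0^∞ x exp{c μ x 𝟙{γ=h} - μ F^{(k)}(0) x^{k+1}/(k+1)!} dx
   / ∫_0^∞ exp{c μ x 𝟙{γ=h} - μ F^{(k)}(0) x^{k+1}/(k+1)!} dx`. -/
theorem mm1gi_heavy_traffic_critical
    (k : ℕ) (hk : 1 ≤ k)
    (F : ℝ → ℝ)
    (hF_mono : Monotone F)
    (hF_zero : ∀ x ≤ (0 : ℝ), F x = 0)
    (hF_range : ∀ x, 0 ≤ x → 0 ≤ F x ∧ F x < 1)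
    (hF_lim : Tendsto F atTop (𝓝 1))
    (hF_smooth : ContDiffOn ℝ k F (Set.Ici 0))
    (hF_derivs : ∀ j < k, iteratedDerivWithin j F (Set.Ici 0) 0 = 0)
    (hF_k : 0 < iteratedDerivWithin k F (Set.Ici 0) 0)
    (μ γ c : ℝ) (hμ : 0 < μ) (hγ : 0 < γ)
    (hγh : (k : ℝ) / (k + 1) ≤ γ)
    (hJ : ∀ᶠ α in 𝓝[>] (0 : ℝ), IntegrableOn
      (fun x : ℝ => Real.exp ((1 + c * α ^ γ) * μ *
        (∫ u in (0 : ℝ)..x, (1 - F (α * u))) - μ * x)) (Set.Ioi 0))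
    (hJ1 : ∀ᶠ α in 𝓝[>] (0 : ℝ), IntegrableOn
      (fun x : ℝ => x * Real.exp ((1 + c * α ^ γ) * μ *
        (∫ u in (0 : ℝ)..x, (1 - F (α * u))) - μ * x)) (Set.Ioi 0)) :
    Tendsto (fun α : ℝ => α ^ ((k : ℝ) / (k + 1)) * Emean F μ c γ α)
      (𝓝[>] (0 : ℝ))
      (𝓝 ((∫ x in Set.Ioi (0 : ℝ), x * Real.exp
            (c * μ * x * (if γ = (k : ℝ) / (k + 1) then (1 : ℝ) else 0)
              - μ * iteratedDerivWithin k F (Set.Ici 0) 0 * x ^ (k + 1)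
                / (Nat.factorial (k + 1))))
        / (∫ x in Set.Ioi (0 : ℝ), Real.exp
            (c * μ * x * (if γ = (k : ℝ) / (k + 1) then (1 : ℝ) else 0)
              - μ * iteratedDerivWithin k F (Set.Ici 0) 0 * x ^ (k + 1)
                / (Nat.factorial (k + 1)))))) := by
  set h : ℝ := (k : ℝ) / (k + 1) with hh
  have hhpos : 0 < h := by
    have : (0 : ℝ) < k := by exact_mod_cast hk
    positivity
  have hF_cont : Continuous F := by
    have : F = fun x => F (max 0 x) := by
      funext x
      rcases le_total x 0 with hx | hx
      · rw [max_eq_left hx, hF_zero x hx, hF_zero 0 le_rfl]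
      · rw [max_eq_right hx]
    rw [this]
    exact hF_smooth.continuousOn.comp_continuous (by fun_prop) fun x => le_max_left 0 x
  set D : ℝ := iteratedDerivWithin k F (Set.Ici 0) 0 with hD
  have hratio := tendsto_integral_div_pow_succ hF_cont
    (tendsto_div_pow_of_iteratedDerivWithin_eq_zero hF_smooth hF_derivs)
  set A : ℝ := D / Nat.factorial k / (k + 1) with hA
  have hApos : 0 < A := by positivity
  have hAD : ∀ y : ℝ, μ * D * y ^ (k + 1) / (Nat.factorial (k + 1)) = μ * (A * y ^ (k + 1)) := by
    intro y
    rw [hA, Nat.factorial_succ]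
    push_cast
    field_simp
  set I : ℝ := if γ = h then 1 else 0 with hI
  have hpow : ∀ s : ℝ, 0 < s → Tendsto (fun α : ℝ => α ^ s) (𝓝[>] 0) (𝓝 0) := by
    intro s hs
    have := (Real.continuousAt_rpow_const 0 s (Or.inr hs.le)).tendsto
    rw [Real.zero_rpow hs.ne'] at this
    exact this.mono_left nhdsWithin_le_nhds
  have hp : Tendsto (fun α : ℝ => c * μ * α ^ (γ - h)) (𝓝[>] 0) (𝓝 (c * μ * I)) := by
    refine Tendsto.const_mul _ ?_
    rcases eq_or_ne γ h with e | e
    · simp [hI, e]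
    · rw [hI, if_neg e]
      exact hpow _ (sub_pos.mpr (lt_of_le_of_ne hγh e.symm))
  have hq : Tendsto (fun α : ℝ => (1 + c * α ^ γ) * μ) (𝓝[>] 0) (𝓝 μ) := by
    simpa using (((hpow γ hγ).const_mul c).const_add 1).mul_const μ
  set H : ℝ → ℝ → ℝ := fun α y => ∫ u in (0 : ℝ)..(α ^ h)⁻¹ * y, F (α * u) with hH
  have hmono : ∀ α : ℝ, 0 < α → Monotone fun u => F (α * u) := fun α hα u v huv =>
    hF_mono (mul_le_mul_of_nonneg_left huv hα.le)
  have hF0 : ∀ x, 0 ≤ F x := fun x => by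
    rcases le_total x 0 with hx | hx
    · exact (hF_zero x hx).ge
    · exact (hF_range x hx).1
  have key := tendsto_integral_pow_mul_exp (H := H) hk hμ hApos hp hq
    (fun y hy => tendsto_integral_rescaled hy hratio)
    (Eventually.of_forall fun α =>
      (intervalIntegral.continuous_primitive
        (fun a b => (Continuous.intervalIntegrable (by fun_prop) a b)) 0).comp
        (continuous_const.mul continuous_id))
    (by
      filter_upwards [self_mem_nhdsWithin] with α (hα : 0 < α) y hy
      exact intervalIntegral.integral_nonneg (by positivity) fun u _ => hF0 _)
    (by
      filter_upwards [self_mem_nhdsWithin] with α (hα : 0 < α) a b ha hab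
      have hr : 0 < (α ^ h)⁻¹ := by positivity
      have := (hmono α hα).mul_integral_le_mul_integral (a := (α ^ h)⁻¹ * a) (b := (α ^ h)⁻¹ * b)
        (by positivity) (by gcongr)
      rw [mul_assoc, mul_assoc] at this
      exact le_of_mul_le_mul_left this hr)
  obtain ⟨hint0, hlim0⟩ := key 0
  obtain ⟨-, hlim1⟩ := key 1
  simp only [pow_zero, one_mul] at hint0 hlim0
  simp only [pow_one] at hlim1
  have hK0 : 0 < ∫ y in Ioi (0 : ℝ), Real.exp (c * μ * I * y - μ * (A * y ^ (k + 1))) := by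
    have : NeZero ((volume : Measure ℝ).restrict (Ioi 0)) := ⟨by simp⟩
    exact integral_exp_pos hint0
  have hexp : ∀ α : ℝ, 0 < α → ∀ y : ℝ,
      c * μ * α ^ (γ - h) * y - (1 + c * α ^ γ) * μ * H α y
        = (1 + c * α ^ γ) * μ * (∫ u in (0 : ℝ)..(α ^ h)⁻¹ * y, (1 - F (α * u)))
          - μ * ((α ^ h)⁻¹ * y) := by
    intro α hα y
    rw [intervalIntegral.integral_sub _root_.intervalIntegrable_const
      (hmono α hα).intervalIntegrable, Real.rpow_sub hα]
    simp only [intervalIntegral.integral_const, smul_eq_mul, hH]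
    ring
  have hlim := (hq.mul hlim1).div ((hpow h hhpos).add (hq.mul hlim0))
    (by rw [zero_add]; positivity)
  rw [zero_add, mul_div_mul_left _ _ hμ.ne'] at hlim
  have hcongr : ∀ y : ℝ, c * μ * y * I - μ * D * y ^ (k + 1) / (Nat.factorial (k + 1))
      = c * μ * I * y - μ * (A * y ^ (k + 1)) := by
    intro y
    rw [hAD]
    ring
  simp only [hcongr]
  refine hlim.congr' ?_
  filter_upwards [self_mem_nhdsWithin] with α (hα : 0 < α)
  have hr : 0 < α ^ h := by positivity
  have hJ0 : ∫ y in Ioi (0 : ℝ),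
      Real.exp (c * μ * α ^ (γ - h) * y - (1 + c * α ^ γ) * μ * H α y)
        = α ^ h * Jq F μ c γ α := by
    have := integral_comp_mul_left_Ioi (fun x : ℝ => Real.exp ((1 + c * α ^ γ) * μ *
        (∫ u in (0 : ℝ)..x, (1 - F (α * u))) - μ * x)) 0 (inv_pos.mpr hr)
    rw [mul_zero, inv_inv, smul_eq_mul] at this
    simp only [hexp α hα]
    exact this
  have hJ1' : ∫ y in Ioi (0 : ℝ),
      y * Real.exp (c * μ * α ^ (γ - h) * y - (1 + c * α ^ γ) * μ * H α y)
        = α ^ h * (α ^ h * J1q F μ c γ α) := by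
    have := integral_comp_mul_left_Ioi (fun x : ℝ => x * Real.exp ((1 + c * α ^ γ) * μ *
        (∫ u in (0 : ℝ)..x, (1 - F (α * u))) - μ * x)) 0 (inv_pos.mpr hr)
    rw [mul_zero, inv_inv, smul_eq_mul] at this
    simp only [hexp α hα]
    rw [J1q, ← this, ← integral_const_mul]
    refine integral_congr_ae (Eventually.of_forall fun y => ?_)
    simp only [← mul_assoc, mul_inv_cancel₀ hr.ne', one_mul]
  simp only [Pi.div_apply]
  rw [hJ0, hJ1', Emean, ← mul_div_assoc, ← mul_div_mul_left (α ^ h * _) _ hr.ne']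
  congr 1 <;> ring
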